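/- arXiv:0802.2928 — 5 statements merged into one kernel-verified Lean document; each statement's English description precedes it below -/
import Mathlib

section
/- For every pair of positive integers k and h, there exists an integer φ(k,h) such that every asymptotic basis for ℕ₀ of order h contains at most φ(k,h) essential subsets of cardinality at most k. -/
/-!
The essential subset `{0}` (which exists only because `IsBasis` demands `0 ∈ A`) is the only one
containing `0`. Every other essential subset has the form `{x ∈ A | ¬ p ∣ x}` for a prime `p`
(`essential_eq`). This rests on a theorem of Erdős–Graham type (`isBasis_diff_singleton`): removing
a nonzero element from a basis leaves a basis as soon as the remaining elements have gcd `1`.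

Given `s` such subsets `P₁, …, P_s`, each of size at most `k`, their primes `pᵢ` are distinct; put
`m = ∏ pᵢ ≥ 2 ^ s`. Elements of `A` outside `E = ⋃ Pᵢ` vanish modulo `m`, while sums of `h`
elements of `A` hit every class modulo `m`. Hence the `h`-fold sumset of `E ∪ {0}` is all of
`ℤ/mℤ`, and `2 ^ s ≤ m ≤ (k * s + 1) ^ h`, which bounds `s` in terms of `k` and `h`.
-/

/-- The `h`-fold sumset of `A ⊆ ℕ`: all sums of `h`-tuples of elements of `A`. -/
def Sumset (A : Set ℕ) (h : ℕ) : Set ℕ :=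
  {n | ∃ l : List ℕ, l.length = h ∧ (∀ x ∈ l, x ∈ A) ∧ l.sum = n}

/-- `A` is an asymptotic basis for `ℕ` of order `h`. -/
def IsBasisOfOrder (A : Set ℕ) (h : ℕ) : Prop :=
  0 ∈ A ∧ 1 ≤ h ∧ (Sumset A h)ᶜ.Finite

/-- `A` is an asymptotic basis for `ℕ` of some order. -/
def IsBasis (A : Set ℕ) : Prop := ∃ h, IsBasisOfOrder A h

/-- `P` is an essentiality of `A`: `A \ P` is not an asymptotic basis of any order,
and `P` is minimal (w.r.t. inclusion) among subsets of `A` with this property. -/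
def IsEssentiality (A P : Set ℕ) : Prop :=
  P ⊆ A ∧ ¬ IsBasis (A \ P) ∧ ∀ Q ⊆ P, ¬ IsBasis (A \ Q) → Q = P

/-- An essential subset is a finite essentiality. -/
def IsEssentialSubset (A P : Set ℕ) : Prop :=
  IsEssentiality A P ∧ P.Finite

lemma sumset_mono {A : Set ℕ} (h0 : 0 ∈ A) {r r' x : ℕ} (hr : r ≤ r') (hx : x ∈ Sumset A r) :
    x ∈ Sumset A r' := by
  obtain ⟨l, hl, hA, rfl⟩ := hx
  refine ⟨l ++ List.replicate (r' - r) 0, by simp [hl, hr], ?_, by simp⟩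
  intro x hx
  rcases List.mem_append.1 hx with hx | hx
  · exact hA x hx
  · rw [List.eq_of_mem_replicate hx]
    exact h0

lemma sumset_add {A : Set ℕ} {r s x y : ℕ} (hx : x ∈ Sumset A r) (hy : y ∈ Sumset A s) :
    x + y ∈ Sumset A (r + s) := by
  obtain ⟨l, hl, hA, rfl⟩ := hx
  obtain ⟨l', hl', hA', rfl⟩ := hy
  refine ⟨l ++ l', by simp [hl, hl'], ?_, by simp⟩
  intro x hx
  rcases List.mem_append.1 hx with hx | hx
  · exact hA x hx
  · exact hA' x hx

lemma exists_sumset_of_mem_closure {C : Set ℕ} {x : ℕ} (hx : x ∈ AddSubmonoid.closure C) :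
    ∃ r, x ∈ Sumset C r := by
  obtain ⟨l, hl, rfl⟩ := AddSubmonoid.exists_list_of_mem_closure hx
  exact ⟨l.length, l, rfl, hl, rfl⟩

/-- A sum of elements of `B` splits into copies of `a` and a sum of elements of `B \ {a}`. -/
lemma list_split {B : Set ℕ} {a : ℕ} (h0 : 0 ∈ B \ {a}) (l : List ℕ) (hl : ∀ x ∈ l, x ∈ B) :
    ∃ j ≤ l.length, ∃ c ∈ Sumset (B \ {a}) l.length, l.sum = j * a + c := by
  induction l with
  | nil => exact ⟨0, le_rfl, 0, ⟨[], rfl, by simp, rfl⟩, by simp⟩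
  | cons x l ih =>
    obtain ⟨j, hj, c, hc, hs⟩ := ih fun y hy => hl y (List.mem_cons_of_mem _ hy)
    by_cases hx : x = a
    · refine ⟨j + 1, by simpa using hj, c, sumset_mono h0 (by simp) hc, ?_⟩
      rw [List.sum_cons, hs, hx]; ring
    · refine ⟨j, by simp; omega, c + x, sumset_add hc
        ⟨[x], rfl, by simpa [hx] using hl x (by simp), by simp⟩, ?_⟩
      rw [List.sum_cons, hs]; ring

/-- If the remaining elements have gcd `1`, some shift `T` puts all `j * a + T` with `j ≤ h` into
one sumset `r C`; writing `n - T` as a sum of `h` elements of `B` then expresses `n` over `C`. -/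
lemma isBasis_diff_singleton {B : Set ℕ} {a : ℕ} (hB : IsBasis B) (ha : a ≠ 0)
    (hg : Nat.setGcd (B \ {a}) = 1) : IsBasis (B \ {a}) := by
  obtain ⟨h, h0, h1, hfin⟩ := hB
  have h0' : 0 ∈ B \ {a} := ⟨h0, by simpa using ha.symm⟩
  obtain ⟨T, hT⟩ := Nat.exists_mem_closure_of_ge (B \ {a})
  have key : ∀ j, ∃ r, j * a + T ∈ Sumset (B \ {a}) r := fun j =>
    exists_sumset_of_mem_closure (hT _ (by omega) (by simp [hg]))
  choose r hr using key
  refine ⟨(Finset.range (h + 1)).sup r + h, h0', by omega, ?_⟩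
  obtain ⟨N, hN⟩ := hfin.bddAbove
  refine (Set.finite_Iic (N + T)).subset fun n hn => ?_
  by_contra hlt
  simp only [Set.mem_Iic, not_le] at hlt
  apply hn
  have hmem : n - T ∈ Sumset B h := by
    by_contra hc
    have := hN hc
    omega
  obtain ⟨l, rfl, hl, hs⟩ := hmem
  obtain ⟨j, hj, c, hc, hs'⟩ := list_split h0' l hl
  have : n = (j * a + T) + c := by omega
  rw [this]
  exact sumset_add (sumset_mono h0'
    (Finset.le_sup (f := r) (Finset.mem_range.2 (by omega))) (hr j)) hc

lemma not_isBasis_of_dvd {C : Set ℕ} {p : ℕ} (hp : p.Prime) (hC : ∀ x ∈ C, p ∣ x) :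
    ¬ IsBasis C := by
  rintro ⟨h, -, -, hfin⟩
  refine Set.infinite_of_injective_forall_mem (f := fun n : ℕ => p * n + 1) ?_ ?_ hfin
  · intro x y hxy
    simpa [hp.ne_zero] using hxy
  · rintro n ⟨l, -, hl, hs⟩
    have h1 : p ∣ l.sum := List.dvd_sum fun x hx => hC x (hl x hx)
    rw [hs] at h1
    exact hp.one_lt.ne' (Nat.dvd_one.1 ((Nat.dvd_add_right (dvd_mul_right p n)).1 h1))

/-- Putting back one `a ∈ P` gives a basis by minimality, so `A \ P` can fail to be a basis only
because a prime `p` divides all its elements. The elements of `A` prime to `p` then form a subset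
of `P` whose removal already destroys the basis property, and minimality gives equality. -/
lemma essential_eq {A P : Set ℕ} (hA : IsBasis A) (hP : IsEssentiality A P) (h0 : 0 ∉ P) :
    ∃ p : ℕ, p.Prime ∧ P = {x ∈ A | ¬ p ∣ x} := by
  obtain ⟨hPA, hnb, hmin⟩ := hP
  have hne : P.Nonempty := by
    rw [Set.nonempty_iff_ne_empty]
    rintro rfl
    simp [hA] at hnb
  obtain ⟨a, ha⟩ := hne
  have hQ : IsBasis (A \ (P \ {a})) := by
    by_contra hc
    have := hmin (P \ {a}) Set.sdiff_subset hc
    rw [← this] at ha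
    simp at ha
  have heq : (A \ (P \ {a})) \ {a} = A \ P := by
    ext x
    simp only [Set.mem_sdiff, Set.mem_singleton_iff]
    constructor
    · rintro ⟨⟨h1, h2⟩, h3⟩
      exact ⟨h1, fun h => h2 ⟨h, h3⟩⟩
    · rintro ⟨h1, h2⟩
      exact ⟨⟨h1, fun h => h2 h.1⟩, fun h => h2 (h ▸ ha)⟩
  have hg : Nat.setGcd (A \ P) ≠ 1 := by
    intro hg
    apply hnb
    rw [← heq] at hg ⊢
    exact isBasis_diff_singleton hQ (fun h => h0 (h ▸ ha)) hg
  obtain ⟨p, hp, hpd⟩ := Nat.exists_prime_and_dvd hg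
  refine ⟨p, hp, (hmin _ ?_ ?_).symm⟩
  · rintro x ⟨hx, hpx⟩
    by_contra hxP
    exact hpx (hpd.trans (Nat.setGcd_dvd_of_mem ⟨hx, hxP⟩))
  · apply not_isBasis_of_dvd hp
    rintro x ⟨hx, hx'⟩
    by_contra hpx
    exact hx' ⟨hx, hpx⟩

open scoped Pointwise in
lemma list_sum_mem_nsmul {m : ℕ} {E : Finset (ZMod m)} (l : List ℕ)
    (hl : ∀ x ∈ l, (x : ZMod m) ∈ E) : ((l.sum : ℕ) : ZMod m) ∈ l.length • E := by
  induction l with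
  | nil => simp
  | cons x l ih =>
    rw [List.length_cons, succ_nsmul', List.sum_cons, Nat.cast_add]
    exact Finset.add_mem_add (hl x (by simp)) (ih fun y hy => hl y (by simp [hy]))

/-- A basis of order `h` whose residues modulo `m` all lie in `E` has `h`-fold sumset of `E` equal
to `ℤ/mℤ`, so `m` is bounded by the number of `h`-tuples from `E`. -/
lemma modulus_le {A : Set ℕ} {h m : ℕ} (hA : IsBasisOfOrder A h) (hm : 0 < m)
    (E : Finset (ZMod m)) (hE : ∀ x ∈ A, (x : ZMod m) ∈ E) : m ≤ E.card ^ h := by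
  open scoped Pointwise in
  have : NeZero m := ⟨hm.ne'⟩
  obtain ⟨N, hN⟩ := hA.2.2.bddAbove
  have huniv : h • E = Finset.univ := by
    rw [Finset.eq_univ_iff_forall]
    intro r
    -- a representative of the class `r` exceeding every element missing from the sumset
    have hmem : r.val + m * (N + 1) ∈ Sumset A h := by
      by_contra hc
      have h1 := hN hc
      nlinarith
    obtain ⟨l, rfl, hl, hs⟩ := hmem
    have := list_sum_mem_nsmul l fun x hx => hE x (hl x hx)
    rw [hs] at this
    simpa using this
  have := Finset.card_nsmul_le (s := E) (n := h)
  rwa [huniv, Finset.card_univ, ZMod.card] at this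

lemma exists_bound (k h : ℕ) : ∃ N, ∀ s : ℕ, 2 ^ s ≤ (k * s + 1) ^ h → s ≤ N := by
  have ht := tendsto_pow_const_div_const_pow_of_one_lt h (r := (2 : ℝ)) (by norm_num)
  have hpos : (0 : ℝ) < 1 / (k + 1 : ℝ) ^ h := by positivity
  obtain ⟨N, hN⟩ := Filter.eventually_atTop.1 (ht.eventually_lt_const hpos)
  refine ⟨N + 1, fun s hs => ?_⟩
  by_contra hc
  have h1 := hN s (by omega)
  rw [div_lt_div_iff₀ (by positivity) (by positivity), one_mul, ← mul_pow] at h1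
  have h2 : (s * (k + 1)) ^ h < 2 ^ s := by exact_mod_cast h1
  have h3 : (k * s + 1) ^ h ≤ (s * (k + 1)) ^ h := Nat.pow_le_pow_left (by nlinarith) h
  omega

/-- The bound for essential subsets not containing `0`. -/
lemma two_pow_card_le {A : Set ℕ} {k h : ℕ} (hA : IsBasisOfOrder A h) (Ps : Finset (Set ℕ))
    (hPs : ∀ P ∈ Ps, (IsEssentialSubset A P ∧ P.ncard ≤ k) ∧ 0 ∉ P) :
    2 ^ Ps.card ≤ (k * Ps.card + 1) ^ h := by
  classical
  have key : ∀ P : Set ℕ, ∃ p : ℕ, P ∈ Ps → p.Prime ∧ P = {x ∈ A | ¬ p ∣ x} := by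
    intro P
    by_cases hP : P ∈ Ps
    · obtain ⟨p, hp⟩ := essential_eq ⟨h, hA⟩ (hPs P hP).1.1.1 (hPs P hP).2
      exact ⟨p, fun _ => hp⟩
    · exact ⟨0, fun h => absurd h hP⟩
  choose p hp using key
  set m := ∏ P ∈ Ps, p P with hm
  have hm2 : 2 ^ Ps.card ≤ m := Finset.pow_card_le_prod _ _ _ fun P hP => (hp P hP).1.two_le
  have hm0 : 0 < m := lt_of_lt_of_le (by positivity) hm2
  let F : Set ℕ → Finset ℕ := fun P => if hf : P.Finite then hf.toFinset else ∅
  have hF : ∀ P ∈ Ps, ∀ x, x ∈ F P ↔ x ∈ P := by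
    intro P hP x
    simp [F, (hPs P hP).1.1.2]
  have hFc : ∀ P ∈ Ps, (F P).card ≤ k := by
    intro P hP
    have hf := (hPs P hP).1.1.2
    have h2 := (hPs P hP).1.2
    rw [Set.ncard_eq_toFinset_card P hf] at h2
    simpa [F, hf] using h2
  let E : Finset ℕ := insert 0 (Ps.biUnion F)
  have hEc : E.card ≤ k * Ps.card + 1 := by
    refine (Finset.card_insert_le _ _).trans ?_
    have := Finset.card_biUnion_le_card_mul Ps F k hFc
    linarith [mul_comm k Ps.card]
  have hcov : ∀ x ∈ A, (x : ZMod m) ∈ E.image (fun x : ℕ => (x : ZMod m)) := by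
    intro x hx
    by_cases hxE : x ∈ E
    · exact Finset.mem_image_of_mem _ hxE
    · refine Finset.mem_image.2 ⟨0, by simp [E], ?_⟩
      rw [Nat.cast_zero, eq_comm, ZMod.natCast_eq_zero_iff]
      have hnot : ∀ P ∈ Ps, x ∉ P := by
        intro P hP hxP
        exact hxE (Finset.mem_insert_of_mem
          (Finset.mem_biUnion.2 ⟨P, hP, (hF P hP x).2 hxP⟩))
      refine Finset.prod_dvd_of_isRelPrime ?_ ?_
      · intro P hP Q hQ hPQ
        refine Nat.coprime_iff_isRelPrime.1 ((Nat.coprime_primes (hp P hP).1 (hp Q hQ).1).2 ?_)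
        intro hpq
        apply hPQ
        rw [(hp P hP).2, (hp Q hQ).2, hpq]
      · intro P hP
        by_contra hd
        apply hnot P hP
        rw [(hp P hP).2]
        exact ⟨hx, hd⟩
  calc 2 ^ Ps.card ≤ m := hm2
    _ ≤ (E.image (fun x : ℕ => (x : ZMod m))).card ^ h := modulus_le hA hm0 _ hcov
    _ ≤ (k * Ps.card + 1) ^ h := Nat.pow_le_pow_left (Finset.card_image_le.trans hEc) h

/-- For every pair of positive integers `k` and `h`, there exists `φ(k,h)` such that every
asymptotic basis of order `h` contains at most `φ(k,h)` essential subsets of cardinality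
at most `k`. -/
theorem number_of_small_essential_subsets_bounded (k h : ℕ) (hk : 0 < k) (hh : 0 < h) :
    ∃ φ : ℕ, ∀ A : Set ℕ, IsBasisOfOrder A h →
      ∀ Ps : Finset (Set ℕ), (∀ P ∈ Ps, IsEssentialSubset A P ∧ P.ncard ≤ k) →
        Ps.card ≤ φ := by
  classical
  obtain ⟨N, hN⟩ := exists_bound k h
  refine ⟨N + 1, fun A hA Ps hPs => ?_⟩
  have hbound : (Ps.erase {0}).card ≤ N := by
    refine hN _ (two_pow_card_le hA _ fun P hP => ?_)
    obtain ⟨hne, hP⟩ := Finset.mem_erase.1 hP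
    refine ⟨hPs P hP, fun h0 => hne ?_⟩
    -- `A \ {0}` is never a basis in the sense of `IsBasis`, so minimality forces `P = {0}`
    refine ((hPs P hP).1.1.2.2 {0} (by simpa using h0) ?_).symm
    rintro ⟨r, hr, -⟩
    simp at hr
  have := Finset.pred_card_le_card_erase (s := Ps) (a := {0})
  omega
end

section
/- Let A be an asymptotic basis for ℕ₀ of order h, and suppose A has exactly φ distinct essential subsets each of cardinality at most k. Then (kφ + 1)^h ≥ p_φ#, where p_φ# denotes the primorial, i.e., the product of the first φ prime numbers. -/
/-! ### Sumsets and removal of finite sets -/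

/-- Since `0 ∈ A`, sumsets grow with the number of summands. -/
lemma Sumset.mono {A : Set ℕ} (h0 : 0 ∈ A) {g h : ℕ} (hgh : g ≤ h) :
    Sumset A g ⊆ Sumset A h := by
  rintro n ⟨l, hl, hlA, rfl⟩
  refine ⟨l ++ List.replicate (h - g) 0, by simp; omega, ?_, by simp⟩
  intro x hx
  rcases List.mem_append.1 hx with hx | hx
  · exact hlA x hx
  · rw [List.eq_of_mem_replicate hx]; exact h0

lemma Sumset.add_mem {A : Set ℕ} {g h m n : ℕ} (hm : m ∈ Sumset A g) (hn : n ∈ Sumset A h) :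
    m + n ∈ Sumset A (g + h) := by
  obtain ⟨l, hl, hlA, rfl⟩ := hm
  obtain ⟨l', hl', hlA', rfl⟩ := hn
  refine ⟨l ++ l', by simp [hl, hl'], ?_, by simp⟩
  intro x hx
  rcases List.mem_append.1 hx with hx | hx
  exacts [hlA x hx, hlA' x hx]

/-- A cofinite sumset contains every integer from some point on. -/
lemma IsBasisOfOrder.exists_bound {A : Set ℕ} {h : ℕ} (hA : IsBasisOfOrder A h) :
    ∃ M, ∀ n, M ≤ n → n ∈ Sumset A h := by
  obtain ⟨M, hM⟩ := hA.2.2.bddAbove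
  refine ⟨M + 1, fun n hn => ?_⟩
  by_contra hc
  have := hM hc
  omega

/-- Removing finitely many nonzero elements from a basis leaves a basis as long as no prime divides
all remaining elements. In a representation of `n - T` the removed elements contribute a bounded
amount `s`, and `s + T` runs through a finite set of sums of remaining elements when `T` is beyond
the Frobenius number. -/
lemma exists_prime_dvd_of_not_isBasis {A P : Set ℕ} {h : ℕ} (hA : IsBasisOfOrder A h)
    (hP : P.Finite) (h0P : 0 ∉ P) (hnot : ¬ IsBasis (A \ P)) :
    ∃ q : ℕ, q.Prime ∧ ∀ a ∈ A \ P, q ∣ a := by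
  classical
  by_cases hg : Nat.setGcd (A \ P) = 1
  swap
  · obtain ⟨q, hq, hqd⟩ := Nat.exists_prime_and_dvd hg
    exact ⟨q, hq, Nat.dvd_setGcd_iff.1 hqd⟩
  exfalso
  apply hnot
  have h0 : 0 ∈ A \ P := ⟨hA.1, h0P⟩
  obtain ⟨T, hT⟩ := Nat.exists_mem_closure_of_ge (A \ P)
  have hT' : ∀ v, T ≤ v → ∃ g, v ∈ Sumset (A \ P) g := by
    intro v hv
    obtain ⟨l, hl, hs⟩ := AddSubmonoid.exists_list_of_mem_closure (hT v hv (by simp [hg]))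
    exact ⟨l.length, l, rfl, hl, hs⟩
  have hrange : ∀ D, ∃ g, ∀ v, T ≤ v → v ≤ T + D → v ∈ Sumset (A \ P) g := by
    intro D
    induction D with
    | zero =>
      obtain ⟨g, hgv⟩ := hT' T le_rfl
      refine ⟨g, fun v h1 h2 => ?_⟩
      obtain rfl : v = T := by omega
      exact hgv
    | succ D ih =>
      obtain ⟨g, ih⟩ := ih
      obtain ⟨g', hg'⟩ := hT' (T + (D + 1)) (by omega)
      refine ⟨max g g', fun v h1 h2 => ?_⟩
      rcases Nat.lt_or_ge v (T + (D + 1)) with hv | hv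
      · exact Sumset.mono h0 (le_max_left _ _) (ih v h1 (by omega))
      · obtain rfl : v = T + (D + 1) := by omega
        exact Sumset.mono h0 (le_max_right _ _) hg'
  obtain ⟨M, hM⟩ := hP.bddAbove
  obtain ⟨B, hB⟩ := hA.exists_bound
  obtain ⟨g, hgr⟩ := hrange (h * M)
  refine ⟨g + h, h0, by have := hA.2.1; omega, ?_⟩
  refine (Set.finite_lt_nat (B + T)).subset fun n hn => ?_
  by_contra hlt
  simp only [Set.mem_ofPred_eq, not_lt] at hlt
  apply hn
  obtain ⟨l, hl, hlA, hsum⟩ := hB (n - T) (by omega)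
  have hsplit : (l.filter (· ∈ P)).sum + (l.filter (· ∉ P)).sum = l.sum := by
    clear hl hlA hsum
    induction l with
    | nil => simp
    | cons a l ih =>
      by_cases ha : a ∈ P <;> simp_all <;> omega
  have hs : (l.filter (· ∈ P)).sum ≤ h * M := by
    calc (l.filter (· ∈ P)).sum ≤ (l.filter (· ∈ P)).length • M :=
          List.sum_le_card_nsmul _ _ fun x hx => hM (by simpa using (List.mem_filter.1 hx).2)
      _ ≤ h * M := by
          rw [smul_eq_mul]
          exact Nat.mul_le_mul_right _ (hl ▸ List.length_filter_le _ _)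
  have h1 : (l.filter (· ∉ P)).sum ∈ Sumset (A \ P) h := by
    refine Sumset.mono h0 (hl ▸ List.length_filter_le _ _) ⟨l.filter (· ∉ P), rfl, ?_, rfl⟩
    intro x hx
    have := List.mem_filter.1 hx
    exact ⟨hlA x this.1, by simpa using this.2⟩
  have h2 := Sumset.add_mem (hgr (T + (l.filter (· ∈ P)).sum) (by omega) (by omega)) h1
  convert h2 using 1
  omega

lemma IsEssentiality.eq_singleton_zero {A P : Set ℕ} (hP : IsEssentiality A P) (h0 : 0 ∈ P) :
    P = {0} :=
  (hP.2.2 {0} (by simpa using h0) (fun ⟨_, hb⟩ => hb.1.2 rfl)).symm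

/-! ### Counting residues -/

/-- The residues modulo `N` are covered by `m`-fold sums only: a large integer needs at least one
of its `m + 1` summands outside the finite set `U`, and that summand vanishes modulo `N`. -/
lemma modulus_le_multichoose {A : Set ℕ} {m N : ℕ} (hA : IsBasisOfOrder A (m + 1))
    (hN : 0 < N) (U : Finset ℕ) (hU : ∀ a ∈ A, a ∉ U → N ∣ a) :
    N ≤ Nat.multichoose (insert 0 U).card m := by
  classical
  have : NeZero N := ⟨hN.ne'⟩
  set B : Finset ℕ := insert 0 U with hBdef
  let F : Sym B m → ZMod N := fun s => (Multiset.map (fun b : B => ((b : ℕ) : ZMod N)) s.1).sum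
  have hF : Function.Surjective F := by
    intro r
    obtain ⟨M, hM⟩ := hA.exists_bound
    obtain ⟨b, hb⟩ := U.bddAbove
    set n := r.val + N * (M + (m + 1) * b + 1) with hn
    have hnbig : M + (m + 1) * b + 1 ≤ n := by
      have : M + (m + 1) * b + 1 ≤ N * (M + (m + 1) * b + 1) := Nat.le_mul_of_pos_left _ hN
      omega
    obtain ⟨l, hl, hlA, hsum⟩ := hM n (by omega)
    obtain ⟨c, hcl, hcU⟩ : ∃ c ∈ l, c ∉ U := by
      by_contra! hall
      have := List.sum_le_card_nsmul l b fun x hx => hb (hall x hx)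
      rw [hl, smul_eq_mul] at this
      omega
    let f : ℕ → B := fun a => if ha : a ∈ U then ⟨a, Finset.mem_insert_of_mem ha⟩
      else ⟨0, Finset.mem_insert_self _ _⟩
    have hf : ∀ a ∈ A, (((f a : B) : ℕ) : ZMod N) = a := by
      intro a ha
      by_cases haU : a ∈ U
      · simp [f, haU]
      · simp [f, haU, (ZMod.natCast_eq_zero_iff a N).2 (hU a ha haU)]
    refine ⟨⟨((l.erase c).map f : List B), by simp [List.length_erase_of_mem hcl, hl]⟩, ?_⟩
    have h1 : (l.erase c).sum + c = n := by
      have := (List.perm_cons_erase hcl).sum_eq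
      simp only [List.sum_cons] at this
      omega
    have h2 : (((l.erase c).sum : ℕ) : ZMod N) = r := by
      have h3 : ((n : ℕ) : ZMod N) = r := by simp [hn]
      rw [← h3, ← h1]
      simp [(ZMod.natCast_eq_zero_iff c N).2 (hU c (hlA c hcl) hcU)]
    rw [← h2]
    simp only [F, Multiset.map_coe, List.map_map, Multiset.sum_coe]
    rw [Nat.cast_list_sum]
    congr 1
    refine List.map_congr_left fun a ha => ?_
    exact hf a (hlA a (List.mem_of_mem_erase ha))
  have hc := Fintype.card_le_of_surjective F hF
  rwa [ZMod.card, Sym.card_sym_eq_multichoose, Fintype.card_coe] at hc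

/-! ### Primorials and Bertrand's postulate -/

/-- Any `n` distinct primes have product at least the `n`-th primorial. -/
lemma primorial_le_prod (n : ℕ) : ∀ s : Finset ℕ, s.card = n → (∀ p ∈ s, p.Prime) →
    ∏ i ∈ Finset.range n, Nat.nth Nat.Prime i ≤ ∏ p ∈ s, p := by
  induction n with
  | zero => intro s hs _; simp [Finset.card_eq_zero.1 hs]
  | succ n ih =>
    intro s hs hp
    have hne : s.Nonempty := Finset.card_pos.1 (by omega)
    have hM := s.max'_mem hne
    set M := s.max' hne with hMdef
    have hcard : (s.erase M).card = n := by rw [Finset.card_erase_of_mem hM]; omega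
    rw [Finset.prod_range_succ, ← Finset.prod_erase_mul s _ hM]
    refine Nat.mul_le_mul (ih _ hcard fun p h => hp p (Finset.mem_of_mem_erase h)) ?_
    have hcount : n ≤ Nat.count Nat.Prime M := by
      rw [Nat.count_eq_card_filter_range, ← hcard]
      refine Finset.card_le_card fun p h => ?_
      simp only [Finset.mem_filter, Finset.mem_range]
      exact ⟨s.lt_max'_of_mem_erase_max' hne h, hp p (Finset.mem_of_mem_erase h)⟩
    calc Nat.nth Nat.Prime n ≤ Nat.nth Nat.Prime (Nat.count Nat.Prime M) :=
          (Nat.nth_le_nth Nat.infinite_setOfPred_prime).2 hcount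
      _ = M := Nat.nth_count (hp M hM)

/-- Bertrand's postulate for consecutive primes. -/
lemma nth_prime_succ_le (n : ℕ) : Nat.nth Nat.Prime (n + 1) ≤ 2 * Nat.nth Nat.Prime n := by
  obtain ⟨p, hp, h1, h2⟩ := Nat.exists_prime_lt_and_le_two_mul _ (Nat.prime_nth_prime n).ne_zero
  refine le_trans ?_ h2
  by_contra! hlt
  exact absurd (Nat.le_nth_of_lt_nth_succ hlt hp) (by omega)

lemma nth_prime_le_two_pow (n : ℕ) : Nat.nth Nat.Prime n ≤ 2 ^ (n + 1) := by
  induction n with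
  | zero => simp
  | succ n ih => rw [pow_succ]; have := nth_prime_succ_le n; omega

/-- Iterating Bertrand's postulate `j` times for `j = 1, …, m` loses a factor
`2 ^ (1 + ⋯ + m)` when all of the top `m` primes are replaced by the next one. -/
lemma nth_prime_pow_le (r m : ℕ) :
    Nat.nth Nat.Prime (r + m) ^ m * ∏ i ∈ Finset.range r, Nat.nth Nat.Prime i ≤
      2 ^ (∑ j ∈ Finset.range (m + 1), j) *
        ∏ i ∈ Finset.range (r + m), Nat.nth Nat.Prime i := by
  induction m with
  | zero => simp
  | succ m ih =>
    rw [Finset.sum_range_succ, ← add_assoc, Finset.prod_range_succ, pow_add 2]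
    calc Nat.nth Nat.Prime (r + m + 1) ^ (m + 1) * ∏ i ∈ Finset.range r, Nat.nth Nat.Prime i
        ≤ (2 * Nat.nth Nat.Prime (r + m)) ^ (m + 1) *
            ∏ i ∈ Finset.range r, Nat.nth Nat.Prime i := by
          gcongr; exact nth_prime_succ_le _
      _ = 2 ^ (m + 1) * Nat.nth Nat.Prime (r + m) *
            (Nat.nth Nat.Prime (r + m) ^ m * ∏ i ∈ Finset.range r, Nat.nth Nat.Prime i) := by
          ring
      _ ≤ 2 ^ (m + 1) * Nat.nth Nat.Prime (r + m) *
            (2 ^ (∑ j ∈ Finset.range (m + 1), j) *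
              ∏ i ∈ Finset.range (r + m), Nat.nth Nat.Prime i) := by gcongr
      _ = _ := by ring

/-! ### The numerical inequality -/

lemma succ_mul_multichoose_succ (y m : ℕ) :
    (m + 1) * Nat.multichoose (y + 1) (m + 1) = (y + 1 + m) * Nat.multichoose (y + 1) m := by
  rw [Nat.multichoose_eq, Nat.multichoose_eq, show y + 1 + (m + 1) - 1 = y + m + 1 by omega,
    show y + 1 + m - 1 = y + m by omega, mul_comm, ← Nat.add_one_mul_choose_eq]
  ring

/-- Counting multisets instead of tuples gains a factor `2` for each summand after the first. -/
lemma two_pow_mul_multichoose_le (y K m : ℕ) (hK : y + 2 ≤ K) :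
    2 ^ m * Nat.multichoose (y + 1) (m + 1) ≤ K ^ (m + 1) := by
  induction m with
  | zero => simp; omega
  | succ m ih =>
    have h := succ_mul_multichoose_succ y (m + 1)
    refine (Nat.mul_le_mul_left_iff (show 0 < m + 2 by omega)).1 ?_
    calc (m + 2) * (2 ^ (m + 1) * Nat.multichoose (y + 1) (m + 1 + 1))
        = 2 ^ (m + 1) * ((m + 1 + 1) * Nat.multichoose (y + 1) (m + 1 + 1)) := by ring
      _ = 2 * (y + 1 + (m + 1)) * (2 ^ m * Nat.multichoose (y + 1) (m + 1)) := by rw [h]; ring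
      _ ≤ ((m + 2) * K) * K ^ (m + 1) := by
          refine Nat.mul_le_mul ?_ ih
          nlinarith [Nat.zero_le (m * y)]
      _ = _ := by ring

/-- The multiset bound for `n` primes leaves enough room for the factor `p_{n+1}`
(`Nat.nth Nat.Prime n`, as `Nat.nth` counts from `0`). -/
lemma primorial_succ_le {n k m y : ℕ} (hn : 1 ≤ n) (hk : 1 ≤ k) (hy : y ≤ k * n)
    (hN : ∏ i ∈ Finset.range n, Nat.nth Nat.Prime i ≤ Nat.multichoose (y + 1) m) :
    ∏ i ∈ Finset.range (n + 1), Nat.nth Nat.Prime i ≤ (k * (n + 1) + 1) ^ (m + 1) := by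
  set N := ∏ i ∈ Finset.range n, Nat.nth Nat.Prime i with hNdef
  set K := k * (n + 1) + 1 with hKdef
  set p := Nat.nth Nat.Prime n with hp
  have hKy : y + 2 ≤ K := by rw [hKdef, mul_add]; omega
  have hKn : n + 2 ≤ K := by rw [hKdef]; nlinarith
  obtain ⟨n', rfl⟩ : ∃ n', n = n' + 1 := ⟨n - 1, by omega⟩
  have hNpos : 0 < N := Finset.prod_pos fun i _ => (Nat.prime_nth_prime i).pos
  have hN2 : 2 ≤ N := by
    have h1 : 1 ≤ ∏ i ∈ Finset.range n', Nat.nth Nat.Prime i :=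
      Finset.prod_pos fun i _ => (Nat.prime_nth_prime i).pos
    rw [hNdef, Finset.prod_range_succ]
    have := (Nat.prime_nth_prime n').two_le
    nlinarith
  rw [Finset.prod_range_succ, ← hNdef, ← hp]
  obtain _ | m := m
  · simp at hN; omega
  have hC := two_pow_mul_multichoose_le y K m hKy
  suffices hs : p ≤ 2 ^ m * K by
    calc N * p ≤ Nat.multichoose (y + 1) (m + 1) * (2 ^ m * K) := Nat.mul_le_mul hN hs
      _ = (2 ^ m * Nat.multichoose (y + 1) (m + 1)) * K := by ring
      _ ≤ K ^ (m + 1) * K := by gcongr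
      _ = _ := by ring
  rcases Nat.lt_or_ge n' m with hmn | hmn
  · calc p ≤ 2 ^ (n' + 1 + 1) := nth_prime_le_two_pow _
      _ = 2 ^ (n' + 1) * 2 := by ring
      _ ≤ 2 ^ m * K := Nat.mul_le_mul (Nat.pow_le_pow_right (by norm_num) hmn) (by omega)
  obtain _ | m := m
  -- A single summand: `p_{n+1} ≤ 2 p_n ≤ p_n#` once `n ≥ 2`.
  · simp only [zero_add, Nat.multichoose_one_right] at hN
    obtain _ | n := n'
    · have : p = 3 := Nat.nth_prime_one_eq_three
      simp only [pow_zero, one_mul]; omega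
    · have h1 := nth_prime_succ_le (n + 1)
      have h2 : 2 ≤ ∏ i ∈ Finset.range (n + 1), Nat.nth Nat.Prime i := by
        have h1 : 1 ≤ ∏ i ∈ Finset.range n, Nat.nth Nat.Prime i :=
          Finset.prod_pos fun i _ => (Nat.prime_nth_prime i).pos
        rw [Finset.prod_range_succ]
        have := (Nat.prime_nth_prime n).two_le
        nlinarith
      have h3 : 2 * Nat.nth Nat.Prime (n + 1) ≤ N := by
        rw [hNdef, Finset.prod_range_succ]; gcongr
      simp only [pow_zero, one_mul]; omega
  by_contra! hlt
  obtain ⟨r, hr⟩ := Nat.exists_eq_add_of_le hmn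
  have hb := nth_prime_pow_le r (m + 2)
  have hidx : r + (m + 2) = n' + 1 := by omega
  rw [hidx, ← hNdef, ← hp] at hb
  have hrpos : 1 ≤ ∏ i ∈ Finset.range r, Nat.nth Nat.Prime i :=
    Finset.prod_pos fun i _ => (Nat.prime_nth_prime i).pos
  -- With `m + 2` summands: `(2 ^ (m+1) K) ^ (m+2)` gains `2 ^ ((m+1)(m+3))` over `N`,
  -- while Bertrand only loses `2 ^ ((m+2)(m+3)/2)`.
  have hexp : ∑ j ∈ Finset.range (m + 2 + 1), j ≤ (m + 1) * (m + 3) := by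
    have := Finset.sum_range_id_mul_two (m + 2 + 1)
    simp only [Nat.add_sub_cancel] at this
    nlinarith
  have hlow : 2 ^ ((m + 1) * (m + 3)) * N ≤ (2 ^ (m + 1) * K) ^ (m + 2) := by
    calc 2 ^ ((m + 1) * (m + 3)) * N
        = 2 ^ ((m + 1) * (m + 2)) * (2 ^ (m + 1) * N) := by ring
      _ ≤ 2 ^ ((m + 1) * (m + 2)) * K ^ (m + 2) := by
          gcongr
          exact le_trans (Nat.mul_le_mul_left _ hN) hC
      _ = _ := by rw [mul_pow, ← pow_mul]
  have hstrict : (2 ^ (m + 1) * K) ^ (m + 2) < p ^ (m + 2) :=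
    Nat.pow_lt_pow_left hlt (by omega)
  have hup : p ^ (m + 2) ≤ 2 ^ ((m + 1) * (m + 3)) * N :=
    calc p ^ (m + 2) ≤ p ^ (m + 2) * ∏ i ∈ Finset.range r, Nat.nth Nat.Prime i :=
          Nat.le_mul_of_pos_right _ hrpos
      _ ≤ _ := hb
      _ ≤ _ := Nat.mul_le_mul_right _ (Nat.pow_le_pow_right (by norm_num) hexp)
  omega

/-! ### Essential subsets and primes -/

/-- If a basis of order `h` has exactly `φ` essential subsets of cardinality at most `k`,
then `(k*φ+1)^h ≥ p_φ#`, the product of the first `φ` primes. -/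
theorem essential_subsets_primorial_bound (A : Set ℕ) (h k φ : ℕ)
    (hA : IsBasisOfOrder A h)
    (hfin : {P : Set ℕ | IsEssentialSubset A P ∧ P.ncard ≤ k}.Finite)
    (hcard : {P : Set ℕ | IsEssentialSubset A P ∧ P.ncard ≤ k}.ncard = φ) :
    (k * φ + 1) ^ h ≥ ∏ i ∈ Finset.range φ, Nat.nth Nat.Prime i := by
  classical
  rw [ge_iff_le]
  obtain _ | n := φ
  · simp
  obtain ⟨m, rfl⟩ : ∃ m, h = m + 1 := ⟨h - 1, by have := hA.2.1; omega⟩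
  rw [Set.ncard_eq_toFinset_card _ hfin] at hcard
  have hk : 1 ≤ k := by
    obtain ⟨P, hP⟩ := Finset.card_pos.1 (by omega : 0 < hfin.toFinset.card)
    obtain ⟨⟨hP, hPf⟩, hPk⟩ := hfin.mem_toFinset.1 hP
    rcases Nat.eq_zero_or_pos P.ncard with h0 | h0
    · rw [Set.ncard_eq_zero hPf] at h0
      subst h0
      exact absurd ⟨_, by simpa using hA⟩ hP.2.1
    · omega
  obtain _ | n := n
  · simp only [zero_add, Finset.prod_range_one, Nat.nth_prime_zero_eq_two, mul_one]
    calc 2 ≤ k + 1 := by omega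
      _ ≤ (k + 1) ^ (m + 1) := Nat.le_self_pow (by omega) _
  -- `{0}` may be counted among the essential subsets; it is the only one that contains `0`.
  obtain ⟨T, hT, hTcard⟩ := Finset.exists_subset_card_eq
    (s := hfin.toFinset.erase {0}) (n := n + 1)
    (by have := Finset.pred_card_le_card_erase (s := hfin.toFinset) (a := {0}); omega)
  have hTess : ∀ P ∈ T, IsEssentialSubset A P ∧ P.ncard ≤ k := fun P hP =>
    hfin.mem_toFinset.1 (Finset.mem_of_mem_erase (hT hP))
  have hprime : ∀ P : Set ℕ, ∃ q : ℕ, P ∈ T → q.Prime ∧ ∀ a ∈ A \ P, q ∣ a := by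
    intro P
    by_cases hP : P ∈ T
    · have hE := (hTess P hP).1
      obtain ⟨q, hq⟩ := exists_prime_dvd_of_not_isBasis hA hE.2
        (fun h0 => Finset.ne_of_mem_erase (hT hP) (hE.1.eq_singleton_zero h0)) hE.1.2.1
      exact ⟨q, fun _ => hq⟩
    · exact ⟨0, fun h => absurd h hP⟩
  choose q hq using hprime
  -- A common prime for `P` and `P'` divides all of `A \ (P ∩ P')`, against minimality.
  have hinj : Set.InjOn q T := by
    intro P hP P' hP' hqq
    have hnb : ¬ IsBasis (A \ (P ∩ P')) := by
      rintro ⟨g, hg⟩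
      obtain ⟨M, hM⟩ := hg.exists_bound
      have hdvd : ∀ a ∈ A \ (P ∩ P'), q P ∣ a := by
        rintro a ⟨haA, ha⟩
        by_cases haP : a ∈ P
        · rw [hqq]; exact (hq P' hP').2 a ⟨haA, fun h => ha ⟨haP, h⟩⟩
        · exact (hq P hP).2 a ⟨haA, haP⟩
      have hpr := (hq P hP).1
      obtain ⟨l, -, hlA, hsum⟩ := hM (M * q P + 1)
        (by have := Nat.le_mul_of_pos_right M hpr.pos; omega)
      have h1 : q P ∣ M * q P + 1 := hsum ▸ List.dvd_sum fun x hx => hdvd x (hlA x hx)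
      have h2 := (Nat.dvd_add_right (Nat.dvd_mul_left (q P) M)).1 h1
      exact hpr.one_lt.ne' (Nat.dvd_one.1 h2)
    rw [← (hTess P hP).1.1.2.2 _ Set.inter_subset_left hnb,
      (hTess P' hP').1.1.2.2 _ Set.inter_subset_right hnb]
  have hfins : ∀ P : Set ℕ, ∃ s : Finset ℕ, P ∈ T → (s : Set ℕ) = P ∧ s.card ≤ k := by
    intro P
    by_cases hP : P ∈ T
    · have hE := hTess P hP
      refine ⟨hE.1.2.toFinset, fun _ => ⟨by simp, ?_⟩⟩
      rw [← Set.ncard_eq_toFinset_card P hE.1.2]; exact hE.2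
    · exact ⟨∅, fun h => absurd h hP⟩
  choose s hs using hfins
  have hUcard : (T.biUnion s).card ≤ k * (n + 1) := by
    calc (T.biUnion s).card ≤ T.card * k :=
          Finset.card_biUnion_le_card_mul _ _ _ fun P hP => (hs P hP).2
      _ = k * (n + 1) := by rw [hTcard, mul_comm]
  have hQprime : ∀ p ∈ T.image q, p.Prime := by
    intro p hp
    obtain ⟨P, hP, rfl⟩ := Finset.mem_image.1 hp
    exact (hq P hP).1
  have hQcard : (T.image q).card = n + 1 := by rw [Finset.card_image_of_injOn hinj, hTcard]
  have hU : ∀ a ∈ A, a ∉ T.biUnion s → ∏ p ∈ T.image q, p ∣ a := by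
    intro a haA haU
    refine Finset.prod_primes_dvd a (fun p hp => (hQprime p hp).prime) fun p hp => ?_
    obtain ⟨P, hP, rfl⟩ := Finset.mem_image.1 hp
    refine (hq P hP).2 a ⟨haA, fun haP => haU ?_⟩
    rw [← (hs P hP).1] at haP
    exact Finset.mem_biUnion.2 ⟨P, hP, haP⟩
  have hmc := (primorial_le_prod _ _ hQcard hQprime).trans
    (modulus_le_multichoose hA (Finset.prod_pos fun p hp => (hQprime p hp).pos) _ hU)
  obtain ⟨y, hy⟩ : ∃ y, (insert 0 (T.biUnion s)).card = y + 1 :=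
    Nat.exists_eq_succ_of_ne_zero (Finset.card_ne_zero_of_mem (Finset.mem_insert_self _ _))
  rw [hy] at hmc
  have hyle : y ≤ k * (n + 1) := by
    have := Finset.card_insert_le 0 (T.biUnion s)
    omega
  exact primorial_succ_le (by omega) hk hyle hmc
end

section
/- Let A be an asymptotic basis for ℕ₀ of some order, and let P₁ and P₂ be two distinct essential subsets of A. For i = 1,2 suppose dᵢ is the largest positive integer d such that A \ Pᵢ is contained in an arithmetic progression of common difference d. Then d₁ and d₂ are relatively prime. -/
/-- `d` is the largest positive common difference of an arithmetic progression
containing `S`. -/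
def IsLargestCommonDiff (S : Set ℕ) (d : ℕ) : Prop :=
  0 < d ∧ (∃ c : ℕ, ∀ a ∈ S, a % d = c % d) ∧
    ∀ e : ℕ, 0 < e → (∃ c : ℕ, ∀ a ∈ S, a % e = c % e) → e ≤ d

lemma IsBasis.infinite {A : Set ℕ} (hA : IsBasis A) : A.Infinite := by
  rintro hfin
  obtain ⟨h, -, -, hc⟩ := hA
  obtain ⟨M, hM⟩ := hfin.bddAbove
  have hsub : Sumset A h ⊆ Set.Iic (h * M) := by
    rintro n ⟨l, hl, hlA, rfl⟩
    have := List.sum_le_card_nsmul l M fun x hx => hM (hlA x hx)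
    simpa [hl] using this
  have hS : (Sumset A h).Finite := (Set.finite_Iic _).subset hsub
  exact hS.infinite_compl hc

/-- As `0` belongs to every basis, the residue class would have to be that of `0`, and then
every sumset consists of multiples of `p`. -/
lemma not_isBasis_of_mod_eq {S : Set ℕ} {p c : ℕ} (hp : 1 < p)
    (hS : ∀ a ∈ S, a % p = c % p) : ¬ IsBasis S := by
  rintro ⟨h, h0, -, hc⟩
  have hdvd : ∀ n ∈ Sumset S h, p ∣ n := by
    rintro n ⟨l, -, hl, rfl⟩
    refine List.dvd_sum fun x hx => Nat.dvd_of_mod_eq_zero ?_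
    rw [hS x (hl x hx), ← hS 0 h0, Nat.zero_mod]
  have hsub : Set.range (fun k : ℕ => p * k + 1) ⊆ (Sumset S h)ᶜ := by
    rintro _ ⟨k, rfl⟩ hk
    have h1 : p ∣ 1 := (Nat.dvd_add_right (dvd_mul_right p k)).1 (hdvd _ hk)
    exact hp.ne' (Nat.dvd_one.1 h1)
  refine Set.infinite_range_of_injective (fun a b hab => ?_) (hc.subset hsub)
  exact Nat.eq_of_mul_eq_mul_left (by omega : 0 < p) (Nat.add_right_cancel hab)

/-- If `P₁`, `P₂` are distinct essential subsets of a basis `A`, then the associated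
largest common differences `d₁`, `d₂` are relatively prime. -/
theorem essential_subsets_coprime_diffs (A P₁ P₂ : Set ℕ) (d₁ d₂ : ℕ)
    (hA : IsBasis A)
    (hP₁ : IsEssentialSubset A P₁) (hP₂ : IsEssentialSubset A P₂)
    (hne : P₁ ≠ P₂)
    (hd₁ : IsLargestCommonDiff (A \ P₁) d₁)
    (hd₂ : IsLargestCommonDiff (A \ P₂) d₂) :
    Nat.Coprime d₁ d₂ := by
  obtain ⟨⟨-, -, hmin₁⟩, hf₁⟩ := hP₁
  obtain ⟨⟨-, -, hmin₂⟩, hf₂⟩ := hP₂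
  obtain ⟨-, ⟨c₁, hc₁⟩, -⟩ := hd₁
  obtain ⟨-, ⟨c₂, hc₂⟩, -⟩ := hd₂
  refine Nat.coprime_of_dvd fun p hp hp₁ hp₂ => hne ?_
  replace hc₁ : ∀ a ∈ A \ P₁, a % p = c₁ % p := fun a ha =>
    Nat.ModEq.of_dvd hp₁ (hc₁ a ha)
  replace hc₂ : ∀ a ∈ A \ P₂, a % p = c₂ % p := fun a ha =>
    Nat.ModEq.of_dvd hp₂ (hc₂ a ha)
  obtain ⟨b, hbA, hb⟩ := (hA.infinite.sdiff (hf₁.union hf₂)).nonempty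
  have hcc : c₁ % p = c₂ % p := by
    rw [← hc₁ b ⟨hbA, fun h => hb (Or.inl h)⟩, hc₂ b ⟨hbA, fun h => hb (Or.inr h)⟩]
  have hnot : ¬ IsBasis (A \ (P₁ ∩ P₂)) := by
    refine not_isBasis_of_mod_eq (c := c₁) hp.one_lt ?_
    rintro a ⟨haA, ha⟩
    by_cases h : a ∈ P₁
    · rw [hc₂ a ⟨haA, fun h' => ha ⟨h, h'⟩⟩, hcc]
    · exact hc₁ a ⟨haA, h⟩
  exact (hmin₁ _ Set.inter_subset_left hnot).symm.trans (hmin₂ _ Set.inter_subset_right hnot)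
end

section
/- For every integer h ≥ 2 there exists a devolved asymptotic basis A for ℕ₀ of order h; that is, an asymptotic basis A of order h such that whenever B ⊆ A is still an asymptotic basis of some order, then for every integer d ≥ 2 and every c ∈ {0,1,…,d−1} the set B contains infinitely many elements congruent to c modulo d. -/
/-- A basis `A` is devolved if every subset `B ⊆ A` which is still a basis contains
infinitely many elements in every congruence class `c` mod `d`, for every `d ≥ 2`. -/
def Devolved (A : Set ℕ) : Prop :=
  ∀ B ⊆ A, IsBasis B → ∀ d : ℕ, 2 ≤ d → ∀ c : ℕ, c < d →
    {b ∈ B | b % d = c}.Infinite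

/-- The modulus prescribed on the `i`-th sparse interval; always positive. -/
def blockModulus (i : ℕ) : ℕ := (Nat.unpair (Nat.unpair i).2).1 + 1

/-- The residue prescribed on the `i`-th sparse interval, to be read modulo `blockModulus i`. -/
def blockResidue (i : ℕ) : ℕ := (Nat.unpair i).1

/-- The devolved basis: on each `((2 i)!, (2 i + 1)!]` only one residue class is kept. -/
def devolvedSet : Set ℕ :=
  {x | ∀ i, (2 * i).factorial < x → x ≤ (2 * i + 1).factorial →
    x ≡ blockResidue i [MOD blockModulus i]}

lemma zero_mem_devolvedSet : 0 ∈ devolvedSet :=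
  fun _ hi => absurd hi (Nat.not_lt_zero _)

lemma blockModulus_le (i : ℕ) : blockModulus i ≤ i + 1 := by
  have h1 := Nat.unpair_left_le (Nat.unpair i).2
  have h2 := Nat.unpair_right_le i
  unfold blockModulus
  omega

lemma mem_devolvedSet_of_full {j x : ℕ} (h1 : (2 * j + 1).factorial < x)
    (h2 : x ≤ (2 * (j + 1)).factorial) : x ∈ devolvedSet := by
  intro i hi hi'
  rcases Nat.lt_or_ge j i with h | h
  · have := Nat.factorial_le (show 2 * (j + 1) ≤ 2 * i by omega)
    omega
  · have := Nat.factorial_le (show 2 * i + 1 ≤ 2 * j + 1 by omega)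
    omega

lemma mem_devolvedSet_of_sparse {j x : ℕ} (h1 : (2 * j).factorial < x)
    (h2 : x ≤ (2 * j + 1).factorial) (h3 : x ≡ blockResidue j [MOD blockModulus j]) :
    x ∈ devolvedSet := by
  intro i hi hi'
  rcases Nat.lt_trichotomy i j with h | h | h
  · have := Nat.factorial_le (show 2 * i + 1 ≤ 2 * j by omega)
    omega
  · exact h ▸ h3
  · have := Nat.factorial_le (show 2 * j + 1 ≤ 2 * i by omega)
    omega

/-- Among the `d` consecutive numbers ending at `L` there is one congruent to `n - c` mod `d`. -/
lemma exists_shift {d : ℕ} (hd : 0 < d) (L n c : ℕ) (hL : d ≤ L) (hn : L ≤ n) :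
    ∃ s, L < s + d ∧ s ≤ L ∧ n - s ≡ c [MOD d] := by
  -- Lowering `s` from `L` by `r` raises `n - s` by `r`, where `r` is the residue of `c - (n - L)`.
  obtain ⟨r, hr, hrc⟩ : ∃ r < d, (n - L) + r ≡ c [MOD d] := by
    refine ⟨(c + (d - (n - L) % d)) % d, Nat.mod_lt _ hd, ?_⟩
    have hlt := Nat.mod_lt (n - L) hd
    calc (n - L) + (c + (d - (n - L) % d)) % d
        ≡ (n - L) % d + (c + (d - (n - L) % d)) [MOD d] :=
          Nat.ModEq.add (Nat.mod_modEq _ _).symm (Nat.mod_modEq _ _)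
      _ = c + d := by omega
      _ ≡ c [MOD d] := by simp [Nat.ModEq]
  refine ⟨L - r, by omega, by omega, ?_⟩
  rwa [show n - (L - r) = (n - L) + r by omega]

lemma exists_add_of_large {n : ℕ} (hn : 6 < n) :
    ∃ a ∈ devolvedSet, ∃ b ∈ devolvedSet, a + b = n := by
  by_cases hA : n ∈ devolvedSet
  · exact ⟨0, zero_mem_devolvedSet, n, hA, Nat.zero_add n⟩
  obtain ⟨i, h1, h2⟩ : ∃ i, (2 * i).factorial < n ∧ n ≤ (2 * i + 1).factorial := by
    by_contra! hcon
    exact hA fun i hi hi' => absurd (hcon i hi) (by omega)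
  -- The sparse intervals with `i ≤ 1` end at `3! = 6`.
  obtain ⟨j, rfl, hj⟩ : ∃ j, i = j + 1 ∧ 1 ≤ j := by
    rcases Nat.lt_or_ge i 2 with h | h
    · have := Nat.factorial_le (show 2 * i + 1 ≤ 3 by omega)
      have h6 : Nat.factorial 3 = 6 := rfl
      omega
    · exact ⟨i - 1, by omega, by omega⟩
  have hL : (2 * (j + 1)).factorial = (2 * j + 2) * (2 * j + 1).factorial :=
    Nat.factorial_succ (2 * j + 1)
  have hLM : 4 * (2 * j + 1).factorial ≤ (2 * (j + 1)).factorial := by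
    rw [hL]
    exact Nat.mul_le_mul_right _ (by omega)
  have hM := Nat.self_le_factorial (2 * j + 1)
  have hd := blockModulus_le (j + 1)
  have hd0 : 0 < blockModulus (j + 1) := Nat.succ_pos _
  rcases Nat.lt_or_ge (2 * (2 * (j + 1)).factorial) n with h | h
  · obtain ⟨s, hs1, hs2, hs3⟩ := exists_shift hd0 (2 * (j + 1)).factorial n
      (blockResidue (j + 1)) (by omega) (by omega)
    exact ⟨s, mem_devolvedSet_of_full (j := j) (by omega) hs2, n - s,
      mem_devolvedSet_of_sparse (j := j + 1) (by omega) (by omega) hs3, by omega⟩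
  · exact ⟨n / 2, mem_devolvedSet_of_full (j := j) (by omega) (by omega), n - n / 2,
      mem_devolvedSet_of_full (j := j) (by omega) (by omega), by omega⟩

lemma devolvedSet_isBasisOfOrder (h : ℕ) (hh : 2 ≤ h) : IsBasisOfOrder devolvedSet h := by
  refine ⟨zero_mem_devolvedSet, by omega, (Set.finite_Iic 6).subset fun n hn => ?_⟩
  by_contra hlt
  obtain ⟨a, ha, b, hb, rfl⟩ := exists_add_of_large (not_le.mp hlt)
  refine hn ⟨a :: b :: List.replicate (h - 2) 0, by simp; omega, ?_, by simp⟩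
  intro x hx
  simp only [List.mem_cons, List.mem_replicate] at hx
  rcases hx with rfl | rfl | ⟨_, rfl⟩
  exacts [ha, hb, zero_mem_devolvedSet]

lemma devolvedSet_devolved : Devolved devolvedSet := by
  rintro B hBA ⟨k, _, _, hfin⟩ d hd c hc
  obtain ⟨K, hK⟩ := hfin.bddAbove
  refine Set.infinite_of_forall_exists_gt fun N => ?_
  set i := Nat.pair c (Nat.pair (d - 1) (N + K + k)) with hi
  have hmod : blockModulus i = d := by simp [blockModulus, hi]; omega
  have hres : blockResidue i = c := by simp [blockResidue, hi]
  have hi_large : N + K + k ≤ i :=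
    (Nat.right_le_pair _ _).trans (Nat.right_le_pair _ _)
  have hL := Nat.self_le_factorial (2 * i)
  have hM := Nat.self_le_factorial (2 * i + 1)
  have hpos := Nat.factorial_pos (2 * i)
  have hmem : (2 * i + 1).factorial ∈ Sumset B k := by
    by_contra hcon
    have := hK hcon
    omega
  obtain ⟨l, hlen, hlB, hsum⟩ := hmem
  obtain ⟨x, hxl, hx⟩ : ∃ x ∈ l, (2 * i).factorial < x := by
    by_contra! hcon
    have hle := List.sum_le_card_nsmul l _ hcon
    rw [hsum, hlen, smul_eq_mul, Nat.factorial_succ] at hle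
    have := Nat.le_of_mul_le_mul_right hle hpos
    omega
  have hxM : x ≤ (2 * i + 1).factorial := hsum ▸ List.le_sum_of_mem hxl
  have hcong := hBA (hlB x hxl) i hx hxM
  rw [hmod, hres] at hcong
  exact ⟨x, ⟨hlB x hxl, Eq.trans hcong (Nat.mod_eq_of_lt hc)⟩, by omega⟩

/-- For every `h ≥ 2` there exists a devolved asymptotic basis of order `h`. -/
theorem exists_devolved_basis (h : ℕ) (hh : 2 ≤ h) :
    ∃ A : Set ℕ, IsBasisOfOrder A h ∧ Devolved A :=
  ⟨devolvedSet, devolvedSet_isBasisOfOrder h hh, devolvedSet_devolved⟩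
end

section
/- Fix an integer h ≥ 1. For every ε > 0 there exists K such that for all integers k ≥ K, every asymptotic basis for ℕ₀ of order h contains at most ε·log k essential subsets of cardinality at most k. (Equivalently, the maximal number φ(k,h) of essential subsets of size at most k in a basis of order h satisfies φ(k,h) = o(log k) as k → ∞ with h fixed.) -/
/-! ### Sumsets and bases -/

lemma Sumset.add {A : Set ℕ} {m n x y : ℕ} (hx : x ∈ Sumset A m) (hy : y ∈ Sumset A n) :
    x + y ∈ Sumset A (m + n) := by
  obtain ⟨l, rfl, h1, rfl⟩ := hx
  obtain ⟨l', rfl, h2, rfl⟩ := hy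
  refine ⟨l ++ l', by simp, ?_, by simp⟩
  intro z hz
  rcases List.mem_append.1 hz with hz | hz
  exacts [h1 z hz, h2 z hz]

lemma Sumset.mono_s12 {A : Set ℕ} (h0 : 0 ∈ A) {m n x : ℕ} (hmn : m ≤ n) (hx : x ∈ Sumset A m) :
    x ∈ Sumset A n := by
  have hz : 0 ∈ Sumset A (n - m) :=
    ⟨List.replicate (n - m) 0, by simp, fun z hz => by
      rw [List.eq_of_mem_replicate hz]; exact h0, by simp⟩
  have := Sumset.add hx hz
  rwa [add_zero, Nat.add_sub_cancel' hmn] at this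

lemma exists_mem_sumset_of_mem_closure {B : Set ℕ} {x : ℕ} (hx : x ∈ AddSubmonoid.closure B) :
    ∃ m, x ∈ Sumset B m := by
  obtain ⟨l, hl, rfl⟩ := AddSubmonoid.exists_list_of_mem_closure hx
  exact ⟨l.length, l, rfl, hl, rfl⟩

lemma finite_compl_iff {s : Set ℕ} : sᶜ.Finite ↔ ∃ N, ∀ n ≥ N, n ∈ s := by
  constructor
  · intro hs
    obtain ⟨N, hN⟩ := hs.bddAbove
    refine ⟨N + 1, fun n hn => ?_⟩
    by_contra hns
    have := hN (show n ∈ sᶜ from hns)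
    omega
  · rintro ⟨N, hN⟩
    refine (Set.finite_lt_nat N).subset fun n hn => ?_
    by_contra hlt
    exact hn (hN n (not_lt.1 hlt))

/-- If `a + N` is a sum of `m` elements of `B` for every `a ∈ A`, then shifting by `h * N` sends
`h`-fold sums of `A` to `h * m`-fold sums of `B`. -/
lemma Sumset.shift {A B : Set ℕ} {N m : ℕ} (hAB : ∀ a ∈ A, a + N ∈ Sumset B m) :
    ∀ {h x : ℕ}, x ∈ Sumset A h → x + h * N ∈ Sumset B (h * m) := by
  rintro h x ⟨l, rfl, hl, rfl⟩
  induction l with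
  | nil => exact ⟨[], by simp, by simp, by simp⟩
  | cons a t ih =>
    have h1 := Sumset.add (hAB a (hl a (by simp))) (ih fun z hz => hl z (by simp [hz]))
    convert h1 using 1
    · rw [List.length_cons]; ring_nf
    · rw [List.sum_cons, List.length_cons]; ring

/-- Deleting a finite set from a basis leaves a basis, possibly of larger order, provided `0` is
kept and the remaining elements have gcd `1`. -/
lemma isBasis_diff_of_setGcd_eq_one {A P : Set ℕ} {h : ℕ} (hA : IsBasisOfOrder A h)
    (hP : P.Finite) (h0 : 0 ∈ A \ P) (hg : Nat.setGcd (A \ P) = 1) : IsBasis (A \ P) := by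
  obtain ⟨N, hN⟩ := Nat.exists_mem_closure_of_ge (A \ P)
  have hcl : ∀ a, ∃ m, a + N ∈ Sumset (A \ P) m := fun a =>
    exists_mem_sumset_of_mem_closure (hN _ (by omega) (by simp [hg]))
  choose m hm using hcl
  obtain ⟨m₁, hm₁⟩ := (hP.image m).bddAbove
  -- `m₁` serves the elements of `P`, `m 0 + 1` the remaining ones
  have hAB : ∀ a ∈ A, a + N ∈ Sumset (A \ P) (m₁ + (m 0 + 1)) := by
    intro a ha
    by_cases haP : a ∈ P
    · exact Sumset.mono_s12 h0 ((hm₁ (Set.mem_image_of_mem m haP)).trans (by omega)) (hm a)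
    · have h1 : a ∈ Sumset (A \ P) 1 := ⟨[a], by simp, by simpa using ⟨ha, haP⟩, by simp⟩
      have h2 := Sumset.add h1 (hm 0)
      rw [zero_add] at h2
      exact Sumset.mono_s12 h0 (by omega) h2
  obtain ⟨N₀, hN₀⟩ := finite_compl_iff.1 hA.2.2
  refine ⟨h * (m₁ + (m 0 + 1)), h0, Nat.mul_pos hA.2.1 (by omega), finite_compl_iff.2 ?_⟩
  refine ⟨N₀ + h * N, fun n hn => ?_⟩
  have := Sumset.shift hAB (hN₀ (n - h * N) (by omega))
  rwa [Nat.sub_add_cancel (by omega)] at this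

lemma not_isBasis_of_prime_dvd {B : Set ℕ} {p : ℕ} (hp : p.Prime) (hB : ∀ b ∈ B, p ∣ b) :
    ¬ IsBasis B := by
  rintro ⟨h, -, -, hfin⟩
  obtain ⟨N, hN⟩ := finite_compl_iff.1 hfin
  obtain ⟨l, -, hl, hs⟩ := hN (p * N + 1)
    (le_trans (Nat.le_mul_of_pos_left N hp.pos) (Nat.le_succ _))
  have hd : p ∣ p * N + 1 := hs ▸ List.dvd_sum fun x hx => hB x (hl x hx)
  exact hp.one_lt.ne' (Nat.dvd_one.1 ((Nat.dvd_add_right (dvd_mul_right p N)).1 hd))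

/-- Essential subsets come from primes. The exception `{0}` is due to the requirement that a basis
contain `0`. -/
lemma IsEssentialSubset.exists_prime {A P : Set ℕ} {h : ℕ} (hA : IsBasisOfOrder A h)
    (hP : IsEssentialSubset A P) (hne : P ≠ {0}) :
    ∃ p : ℕ, p.Prime ∧ P = {a ∈ A | ¬ p ∣ a} := by
  obtain ⟨⟨hPA, hnot, hmin⟩, hfin⟩ := hP
  have h0P : 0 ∉ P := by
    intro h0
    refine hne (hmin {0} (by simpa using h0) ?_).symm
    rintro ⟨_, h1, -⟩
    exact h1.2 rfl
  have hg : Nat.setGcd (A \ P) ≠ 1 := fun hg =>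
    hnot (isBasis_diff_of_setGcd_eq_one hA hfin ⟨hA.1, h0P⟩ hg)
  obtain ⟨p, hp, hpd⟩ := Nat.exists_prime_and_dvd hg
  refine ⟨p, hp, (hmin _ ?_ ?_).symm⟩
  · rintro a ⟨haA, hpa⟩
    by_contra haP
    exact hpa (hpd.trans (Nat.setGcd_dvd_of_mem ⟨haA, haP⟩))
  · refine not_isBasis_of_prime_dvd hp fun b hb => ?_
    by_contra hpb
    exact hb.2 ⟨hb.1, hpb⟩

/-! ### The counting bound -/

lemma factorial_card_le_prod (S : Finset ℕ) (hS : ∀ x ∈ S, 1 ≤ x) :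
    S.card.factorial ≤ ∏ x ∈ S, x := by
  induction S using Finset.induction_on_max with
  | empty => simp
  | insert a s hlt ih =>
    have ha : a ∉ s := fun h => lt_irrefl _ (hlt a h)
    rw [Finset.card_insert_of_notMem ha, Finset.prod_insert ha, Nat.factorial_succ]
    refine Nat.mul_le_mul ?_ (ih fun x hx => hS x (by simp [hx]))
    have hsub : s ⊆ Finset.Ico 1 a := fun x hx =>
      Finset.mem_Ico.2 ⟨hS x (by simp [hx]), hlt x hx⟩
    have h1 := Finset.card_le_card hsub
    have h2 := hS a (by simp)
    rw [Nat.card_Ico] at h1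
    omega

/-- Modulo `M = ∏ p ∈ S, p` every element of `A` is `0` or in one of the sets `{a ∈ A | ¬ p ∣ a}`,
and `h`-fold sums of elements of `A` cover `ZMod M`. -/
lemma prod_primes_le {A : Set ℕ} {h k : ℕ} (hA : IsBasisOfOrder A h) (S : Finset ℕ)
    (hS : ∀ p ∈ S, p.Prime ∧ {a ∈ A | ¬ p ∣ a}.Finite ∧ {a ∈ A | ¬ p ∣ a}.ncard ≤ k) :
    ∏ p ∈ S, p ≤ (S.card * k + 1) ^ h := by
  classical
  set M := ∏ p ∈ S, p with hM
  have hMpos : 0 < M := Finset.prod_pos fun p hp => (hS p hp).1.pos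
  have : NeZero M := ⟨hMpos.ne'⟩
  let U : Finset ℕ := S.attach.biUnion fun p => (hS p.1 p.2).2.1.toFinset
  have hU : U.card ≤ S.card * k := by
    have := Finset.card_biUnion_le_card_mul S.attach
      (fun p => (hS p.1 p.2).2.1.toFinset) k (fun p _ => by
        rw [← Set.ncard_eq_toFinset_card _ (hS p.1 p.2).2.1]; exact (hS p.1 p.2).2.2)
    rwa [Finset.card_attach] at this
  let V : Finset ℕ := insert 0 U
  have hV : V.card ≤ S.card * k + 1 := (Finset.card_insert_le _ _).trans (by omega)
  have hred : ∀ a ∈ A, ∃ v : V, ((v : ℕ) : ZMod M) = (a : ZMod M) := by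
    intro a ha
    by_cases hd : M ∣ a
    · exact ⟨⟨0, Finset.mem_insert_self _ _⟩, by
        rw [(ZMod.natCast_eq_zero_iff a M).2 hd]; simp⟩
    · have hex : ∃ p ∈ S, ¬ p ∣ a := by
        by_contra hcon
        push Not at hcon
        exact hd (Finset.prod_primes_dvd a (fun p hp => (hS p hp).1.prime) hcon)
      obtain ⟨p, hp, hpa⟩ := hex
      refine ⟨⟨a, Finset.mem_insert_of_mem ?_⟩, rfl⟩
      simp only [U, Finset.mem_biUnion, Finset.mem_attach, true_and, Subtype.exists,
        Set.Finite.mem_toFinset, Set.mem_ofPred_eq]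
      exact ⟨p, hp, ha, hpa⟩
  have hsurj : Function.Surjective
      (fun v : Fin h → V => ∑ i, ((v i : ℕ) : ZMod M)) := by
    intro r
    obtain ⟨N, hN⟩ := finite_compl_iff.1 hA.2.2
    obtain ⟨l, rfl, hl, hsum⟩ := hN (r.val + M * N)
      (le_trans (Nat.le_mul_of_pos_left N hMpos) (Nat.le_add_left _ _))
    choose v hv using fun i : Fin l.length => hred (l.get i) (hl _ (List.get_mem l i))
    refine ⟨v, ?_⟩
    have hls : ∑ i, l.get i = l.sum := by
      rw [← List.sum_ofFn, List.ofFn_get]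
    simp only [hv]
    rw [← Nat.cast_sum, hls, hsum]
    simp
  have := Fintype.card_le_of_surjective _ hsurj
  rw [ZMod.card, Fintype.card_fun, Fintype.card_coe, Fintype.card_fin] at this
  exact this.trans (Nat.pow_le_pow_left hV h)

/-- All but possibly one of the members of `Ps` come from distinct primes. -/
lemma exists_factorial_le {A : Set ℕ} {h k : ℕ} (hA : IsBasisOfOrder A h) (Ps : Finset (Set ℕ))
    (hPs : ∀ P ∈ Ps, IsEssentialSubset A P ∧ P.ncard ≤ k) :
    ∃ n : ℕ, Ps.card ≤ n + 1 ∧ n.factorial ≤ (n * k + 1) ^ h := by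
  classical
  have hpr : ∀ P ∈ Ps.erase {0}, ∃ p : ℕ, p.Prime ∧ P = {a ∈ A | ¬ p ∣ a} := fun P hP =>
    (hPs P (Finset.mem_of_mem_erase hP)).1.exists_prime hA (Finset.ne_of_mem_erase hP)
  choose! f hf using hpr
  have hcard : ((Ps.erase {0}).image f).card = (Ps.erase {0}).card := by
    refine Finset.card_image_of_injOn fun P hP Q hQ hPQ => ?_
    rw [(hf P hP).2, (hf Q hQ).2, hPQ]
  refine ⟨(Ps.erase {0}).card, by
    have := Finset.pred_card_le_card_erase (s := Ps) (a := {0})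
    omega, ?_⟩
  have hS : ∀ p ∈ (Ps.erase {0}).image f, p.Prime ∧ {a ∈ A | ¬ p ∣ a}.Finite ∧
      {a ∈ A | ¬ p ∣ a}.ncard ≤ k := by
    intro p hp
    obtain ⟨P, hP, rfl⟩ := Finset.mem_image.1 hp
    have h1 := hPs P (Finset.mem_of_mem_erase hP)
    rw [← (hf P hP).2]
    exact ⟨(hf P hP).1, h1.1.2, h1.2⟩
  have h1 := prod_primes_le hA _ hS
  have h2 := factorial_card_le_prod _ fun p hp => (hS p hp).1.one_le
  rw [hcard] at h1 h2
  exact h2.trans h1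

/-! ### Asymptotics -/

/-- Factorials eventually beat `C * D ^ n`. -/
lemma exists_forall_lt_factorial (C D : ℝ) :
    ∃ n₀ : ℕ, ∀ n ≥ n₀, C * D ^ n < (n.factorial : ℝ) := by
  have ht := (FloorSemiring.tendsto_pow_div_factorial_atTop D).const_mul C
  rw [mul_zero] at ht
  obtain ⟨n₀, hn₀⟩ := Filter.eventually_atTop.1 (ht.eventually_lt_const one_pos)
  refine ⟨n₀, fun n hn => ?_⟩
  have h1 := hn₀ n hn
  rwa [← mul_div_assoc, div_lt_one (by positivity)] at h1

/-- With `h` fixed, the number of essential subsets of size at most `k` in a basis of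
order `h` is `o(log k)` as `k → ∞`. -/
theorem essential_subsets_count_little_o_log (h : ℕ) (hh : 1 ≤ h) :
    ∀ ε : ℝ, 0 < ε → ∃ K : ℕ, ∀ k : ℕ, K ≤ k →
      ∀ A : Set ℕ, IsBasisOfOrder A h →
        ∀ Ps : Finset (Set ℕ), (∀ P ∈ Ps, IsEssentialSubset A P ∧ P.ncard ≤ k) →
          (Ps.card : ℝ) ≤ ε * Real.log k := by
  intro ε hε
  obtain ⟨n₀, hn₀⟩ := exists_forall_lt_factorial
    ((h.factorial : ℝ) * Real.exp (1 + h / ε)) (Real.exp (1 + h / ε))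
  -- the choice of `K` makes `ε * log k ≥ n₀ + 1`
  refine ⟨⌈Real.exp ((n₀ + 1) / ε)⌉₊, fun k hk A hA Ps hPs => ?_⟩
  have hkexp : Real.exp ((n₀ + 1) / ε) ≤ k := Nat.ceil_le.1 hk
  have hk0 : (0 : ℝ) < k := (Real.exp_pos _).trans_le hkexp
  have hk1 : 1 ≤ k := by exact_mod_cast hk0
  by_contra! hcon
  obtain ⟨n, hn, hfac⟩ := exists_factorial_le hA Ps hPs
  have hn' : (Ps.card : ℝ) ≤ n + 1 := by exact_mod_cast hn
  have hlog : ε * Real.log k < n + 1 := hcon.trans_le hn'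
  have hnn : n₀ ≤ n := by
    have h1 := (Real.le_log_iff_exp_le hk0).2 hkexp
    rw [div_le_iff₀ hε] at h1
    have h2 : (n₀ : ℝ) < n := by linarith
    exact_mod_cast h2.le
  have hkle : (k : ℝ) ≤ Real.exp ((n + 1) / ε) := by
    rw [← Real.log_le_iff_le_exp hk0, le_div_iff₀ hε]
    linarith
  have hpow : ((n : ℝ) + 1) ^ h ≤ h.factorial * Real.exp (n + 1) := by
    have h1 := Real.pow_div_factorial_le_exp ((n : ℝ) + 1) (by positivity) h
    rwa [div_le_iff₀' (by positivity)] at h1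
  have hfacR : (n.factorial : ℝ) ≤ ((n : ℝ) * k + 1) ^ h := by exact_mod_cast hfac
  have hle : (n : ℝ) * k + 1 ≤ (n + 1) * k := by
    have : (1 : ℝ) ≤ k := by exact_mod_cast hk1
    linarith
  refine absurd (hn₀ n hnn) (not_lt.2 ?_)
  calc (n.factorial : ℝ) ≤ ((n : ℝ) * k + 1) ^ h := hfacR
    _ ≤ (((n : ℝ) + 1) * k) ^ h := by gcongr
    _ = ((n : ℝ) + 1) ^ h * (k : ℝ) ^ h := mul_pow _ _ _
    _ ≤ (h.factorial * Real.exp (n + 1)) * Real.exp ((n + 1) / ε) ^ h := by gcongr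
    _ = h.factorial * Real.exp (1 + h / ε) * Real.exp (1 + h / ε) ^ n := by
      rw [← Real.exp_nat_mul, ← Real.exp_nat_mul, mul_assoc, mul_assoc, ← Real.exp_add,
        ← Real.exp_add]
      congr 2
      ring
end
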